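/- Let h ≥ 0 be an integer and let f, g : ℕ → ℂ have finite Ramanujan expansions (i.e. their Eratosthenes transforms f', g' have finite support). Then the singular series satisfies 𝔖_{f,g}(h) = Σ_{l | h} l · Σ_d (f'(d)/d) · Σ_{q : gcd(q,d) = l} g'(q)/q, where for h = 0 the condition l | h means all l ≥ 1. -/

import Mathlib

/-- The Ramanujan sum `c_q(n) = ∑_{d ∣ gcd(q,n)} d · μ(q/d)`. -/
def ramanujanSum (q : ℕ) (n : ℤ) : ℤ :=
  ∑ d ∈ (Nat.gcd q n.natAbs).divisors, (d : ℤ) * ArithmeticFunction.moebius (q / d)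

/-!
By bilinearity everything is compared for one pair `(d, m)`: there
`∑_{q ∣ gcd(d, m)} c_q(n)` equals `gcd(d, m)` if `gcd(d, m) ∣ n` and `0` otherwise. Multiplying by
`g'(m)/m` and summing over `m` gives, for each `d`,
`∑_{q ∣ d} ĝ(q) c_q(n) = ∑_{l ∣ d, l ∣ n} l ∑_{gcd(m, d) = l} g'(m)/m`,
and the theorem is the combination of these identities with weights `f'(d)/d`. As `f'` has finite
support, only finitely many `d`, and hence finitely many `q` and `l`, contribute, so summability of
`g'(m)/m` is all that is asked of `g`.
-/

open Finset Function

lemma divisors_filter_dvd_eq_divisors_gcd {d : ℕ} (hd : d ≠ 0) (m : ℕ) :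
    {q ∈ d.divisors | q ∣ m} = (d.gcd m).divisors := by
  ext q
  simp [Nat.dvd_gcd_iff, hd]

lemma sum_divisors_ramanujanSum {k : ℕ} (hk : k ≠ 0) (n : ℤ) :
    ∑ q ∈ k.divisors, ramanujanSum q n = if k ∣ n.natAbs then (k : ℤ) else 0 := by
  refine (ArithmeticFunction.sum_eq_iff_sum_mul_moebius_eq (f := fun q ↦ ramanujanSum q n)
    (g := fun k ↦ if k ∣ n.natAbs then (k : ℤ) else 0)).2 (fun q hq ↦ ?_) k (Nat.pos_of_ne_zero hk)
  simp only [Int.cast_id]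
  rw [Nat.sum_divisorsAntidiagonal' (f := fun i j ↦
      ArithmeticFunction.moebius i * if j ∣ n.natAbs then (j : ℤ) else 0),
    ramanujanSum, ← divisors_filter_dvd_eq_divisors_gcd hq.ne', sum_filter]
  refine sum_congr rfl fun d _ ↦ ?_
  rw [mul_comm, ite_mul, zero_mul]

lemma sum_ramanujanSum_filter_dvd_eq_sum_filter_gcd (d m : ℕ) (n : ℤ) :
    ∑ q ∈ d.divisors with 1 ≤ m ∧ q ∣ m, ramanujanSum q n =
      ∑ l ∈ {l ∈ d.divisors | l ∣ n.natAbs} with 1 ≤ m ∧ m.gcd d = l, (l : ℤ) := by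
  obtain rfl | hd := eq_or_ne d 0
  · simp
  obtain rfl | hm := m.eq_zero_or_pos
  · simp
  have hgcd : d.gcd m ≠ 0 := Nat.gcd_ne_zero_left hd
  have hmem : d.gcd m ∈ d.divisors := Nat.mem_divisors.2 ⟨Nat.gcd_dvd_left d m, hd⟩
  simp only [Nat.one_le_iff_ne_zero, hm.ne', ne_eq, not_false_eq_true, true_and]
  rw [divisors_filter_dvd_eq_divisors_gcd hd, sum_divisors_ramanujanSum hgcd, sum_filter,
    sum_ite_eq, m.gcd_comm]
  simp only [mem_filter, hmem, true_and]

section RamanujanCoeff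

variable {R : Type*} [AddCommMonoid R] [TopologicalSpace R]

/-- The Ramanujan coefficient `f̂(q)`, as a function of the weights `a m = f'(m) / m`. -/
noncomputable def ramanujanCoeff (a : ℕ → R) (q : ℕ) : R :=
  ∑' m : ℕ, if 1 ≤ m ∧ q ∣ m then a m else 0

/-- The sum of the weights `b q` over the positive `q` with `gcd(q, d) = l`; for
`b q = g'(q) / q` this is the innermost sum of the singular sum. -/
noncomputable def gcdFiberSum (b : ℕ → R) (l d : ℕ) : R :=
  ∑' q : ℕ, if 1 ≤ q ∧ q.gcd d = l then b q else 0

lemma gcdFiberSum_eq_zero_of_not_dvd (b : ℕ → R) {l d : ℕ} (hld : ¬l ∣ d) :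
    gcdFiberSum b l d = 0 := by
  have hterm (q : ℕ) : (if 1 ≤ q ∧ q.gcd d = l then b q else 0) = 0 :=
    if_neg fun ⟨_, hgcd⟩ ↦ hld (hgcd ▸ q.gcd_dvd_right d)
  simp only [gcdFiberSum, hterm, tsum_zero]

end RamanujanCoeff

lemma tsum_ite_mul_eq_sum {ι R : Type*} [NonUnitalNonAssocSemiring R] [TopologicalSpace R]
    {a : ι → R} (ha : a.HasFiniteSupport) (p : ι → Prop) [DecidablePred p] (w : ι → R) :
    ∑' i, (if p i then a i * w i else 0) = ∑ i ∈ ha.toFinset, a i * if p i then w i else 0 := by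
  simp only [mul_ite, mul_zero]
  refine tsum_eq_sum fun i hi ↦ ?_
  have hai : a i = 0 := by simpa using mt ha.mem_toFinset.2 hi
  simp [hai]

lemma tsum_sum_mul_eq_sum_mul_sum {ι κ R : Type*} [NonUnitalNonAssocSemiring R]
    [TopologicalSpace R] [IsTopologicalSemiring R] [T2Space R] (s : Finset ι) (t : ι → Finset κ)
    (a : ι → R) {K : κ → ι → R} (hK : ∀ j i, j ∉ t i → K j i = 0) :
    ∑' j, ∑ i ∈ s, a i * K j i = ∑ i ∈ s, a i * ∑ j ∈ t i, K j i := by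
  have hsum (i : ι) : HasSum (fun j ↦ K j i) (∑ j ∈ t i, K j i) :=
    hasSum_sum_of_ne_finset_zero fun j hj ↦ hK j i hj
  exact (hasSum_sum fun i _ ↦ (hsum i).mul_left (a i)).tsum_eq

section FiniteSupport

variable {R : Type*} [Semiring R] [TopologicalSpace R] [IsTopologicalSemiring R] [T2Space R]
  {a : ℕ → R}

lemma tsum_ramanujanCoeff_mul (ha : a.HasFiniteSupport) (w : ℕ → R) :
    ∑' q, (if 1 ≤ q then ramanujanCoeff a q * w q else 0) =
      ∑ d ∈ ha.toFinset, a d * ∑ q ∈ d.divisors, w q := by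
  have hcoeff (q : ℕ) : ramanujanCoeff a q =
      ∑ d ∈ ha.toFinset, a d * if 1 ≤ d ∧ q ∣ d then 1 else 0 := by
    simpa only [ramanujanCoeff, mul_one] using
      tsum_ite_mul_eq_sum ha (fun d ↦ 1 ≤ d ∧ q ∣ d) fun _ ↦ 1
  have hterm (q : ℕ) : (if 1 ≤ q then ramanujanCoeff a q * w q else 0) =
      ∑ d ∈ ha.toFinset, a d * if q ∈ d.divisors then w q else 0 := by
    obtain rfl | hq := q.eq_zero_or_pos
    · simp
    · simp only [hcoeff, sum_mul, mul_assoc, ite_mul, one_mul, zero_mul, Nat.mem_divisors,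
        ← Nat.one_le_iff_ne_zero, if_pos (Nat.one_le_iff_ne_zero.2 hq.ne'), and_comm]
  simp only [hterm]
  rw [tsum_sum_mul_eq_sum_mul_sum _ Nat.divisors a fun q d hq ↦ if_neg hq]
  simp only [sum_ite_mem, inter_self]

lemma tsum_mul_tsum_gcdFiberSum (ha : a.HasFiniteSupport) (b : ℕ → R) (n : ℤ) :
    ∑' l : ℕ, (if 1 ≤ l ∧ l ∣ n.natAbs then
        (l : R) * ∑' d, (if 1 ≤ d then a d * gcdFiberSum b l d else 0) else 0) =
      ∑ d ∈ ha.toFinset, a d * ∑ l ∈ d.divisors with l ∣ n.natAbs, (l : R) * gcdFiberSum b l d := by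
  have hterm (l : ℕ) : (if 1 ≤ l ∧ l ∣ n.natAbs then
        (l : R) * ∑' d, (if 1 ≤ d then a d * gcdFiberSum b l d else 0) else 0) =
      ∑ d ∈ ha.toFinset, a d *
        if l ∈ d.divisors ∧ l ∣ n.natAbs then (l : R) * gcdFiberSum b l d else 0 := by
    rw [tsum_ite_mul_eq_sum ha (1 ≤ ·) (gcdFiberSum b l), mul_sum]
    split_ifs with hl
    · refine sum_congr rfl fun d _ ↦ ?_
      rw [(Nat.cast_commute l (a d)).left_comm]
      by_cases hld : l ∣ d
      · simp only [Nat.mem_divisors, hld, hl.2, Nat.one_le_iff_ne_zero, true_and, and_true,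
          mul_ite, mul_zero]
      · simp [gcdFiberSum_eq_zero_of_not_dvd b hld]
    · refine (sum_eq_zero fun d _ ↦ ?_).symm
      rw [if_neg fun h ↦ hl ⟨Nat.pos_of_mem_divisors h.1, h.2⟩, mul_zero]
  simp only [hterm]
  rw [tsum_sum_mul_eq_sum_mul_sum _ Nat.divisors a fun l d hl ↦ if_neg fun h ↦ hl h.1]
  refine sum_congr rfl fun d _ ↦ ?_
  rw [sum_filter]
  exact congrArg (a d * ·) (sum_congr rfl fun l hl ↦ by simp only [hl, true_and])

end FiniteSupport

section Summable

variable {R : Type*} [Ring R] [UniformSpace R] [IsUniformAddGroup R] [IsTopologicalSemiring R]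
  [CompleteSpace R] [T2Space R]

lemma sum_mul_tsum_ite {ι β : Type*} {b : β → R} (hb : Summable b) (s : Finset ι) (w : ι → R)
    (p : ι → β → Prop) [∀ i, DecidablePred (p i)] :
    ∑ i ∈ s, w i * ∑' m, (if p i m then b m else 0) = ∑' m, (∑ i ∈ s with p i m, w i) * b m := by
  have hsum (i : ι) : Summable fun m ↦ if p i m then b m else 0 := by
    classical
    exact (hb.indicator {m | p i m}).congr fun m ↦ by simp [Set.indicator_apply]
  have hterm (m : β) : (∑ i ∈ s with p i m, w i) * b m =
      ∑ i ∈ s, w i * if p i m then b m else 0 := by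
    simp only [sum_filter, sum_mul, ite_mul, zero_mul, mul_ite, mul_zero]
  simp only [hterm, Summable.tsum_finsetSum fun i _ ↦ (hsum i).mul_left (w i),
    (hsum _).tsum_mul_left]

variable {a b : ℕ → R}

lemma sum_divisors_ramanujanSum_mul_ramanujanCoeff (hb : Summable b) (d : ℕ) (n : ℤ) :
    ∑ q ∈ d.divisors, (ramanujanSum q n : R) * ramanujanCoeff b q =
      ∑ l ∈ d.divisors with l ∣ n.natAbs, (l : R) * gcdFiberSum b l d := by
  unfold ramanujanCoeff gcdFiberSum
  rw [sum_mul_tsum_ite hb, sum_mul_tsum_ite hb]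
  congr! 3 with m
  simpa only [Int.cast_sum, Int.cast_natCast] using congrArg (Int.cast (R := R))
    (sum_ramanujanSum_filter_dvd_eq_sum_filter_gcd d m n)

theorem singular_series_as_singular_sum_general (ha : a.HasFiniteSupport) (hb : Summable b)
    (n : ℤ) :
    ∑' q : ℕ, (if 1 ≤ q then
        ramanujanCoeff a q * ramanujanCoeff b q * (ramanujanSum q n : R) else 0) =
      ∑' l : ℕ, if 1 ≤ l ∧ l ∣ n.natAbs then
        (l : R) * ∑' d : ℕ, (if 1 ≤ d then a d * gcdFiberSum b l d else 0) else 0 := by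
  simp only [mul_assoc, ← (Int.cast_commute _ (ramanujanCoeff b _)).eq]
  rw [tsum_ramanujanCoeff_mul ha, tsum_mul_tsum_gcdFiberSum ha]
  simp only [sum_divisors_ramanujanSum_mul_ramanujanCoeff hb]

end Summable

lemma hasFiniteSupport_div_natCast {K : Type*} [DivisionSemiring K] {f : ℕ → K}
    (hf : ∃ D, ∀ d, D < d → f d = 0) : (fun d ↦ f d / (d : K)).HasFiniteSupport := by
  obtain ⟨D, hD⟩ := hf
  refine (Set.finite_Iic D).subset fun d hd ↦ ?_
  contrapose! hd
  simp [hD d (by simpa using hd)]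

/-- Lemma A.6: let `h ≥ 0` be an integer and let `f, g : ℕ → ℂ`
have finite Ramanujan expansions (their Eratosthenes transforms `f'`, `g'` have
finite support).  Then the singular series
`𝔖_{f,g}(h) = ∑_{q ≥ 1} f̂(q) ĝ(q) c_q(h)`, with
`f̂(q) = ∑_{m ≡ 0 (mod q)} f'(m)/m`, satisfies
`𝔖_{f,g}(h) = ∑_{l ∣ h} l ∑_d (f'(d)/d) ∑_{q : gcd(q,d) = l} g'(q)/q`
(where for `h = 0` the condition `l ∣ h` holds for every `l ≥ 1`). -/
theorem singular_series_as_singular_sum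
    (h : ℕ) (f' g' : ℕ → ℂ)
    (hf : ∃ D : ℕ, ∀ d : ℕ, D < d → f' d = 0)
    (hg : ∃ D : ℕ, ∀ d : ℕ, D < d → g' d = 0) :
    (∑' q : ℕ, if 1 ≤ q then
        (∑' m : ℕ, if 1 ≤ m ∧ q ∣ m then f' m / (m : ℂ) else 0) *
          (∑' m : ℕ, if 1 ≤ m ∧ q ∣ m then g' m / (m : ℂ) else 0) *
          (ramanujanSum q (h : ℤ) : ℂ)
      else 0)
    = ∑' l : ℕ, if 1 ≤ l ∧ l ∣ h then
        (l : ℂ) * ∑' d : ℕ, (if 1 ≤ d then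
          f' d / (d : ℂ) * ∑' q : ℕ, (if 1 ≤ q ∧ Nat.gcd q d = l then g' q / (q : ℂ) else 0)
        else 0)
      else 0 :=
  singular_series_as_singular_sum_general (hasFiniteSupport_div_natCast hf)
    (summable_of_hasFiniteSupport (hasFiniteSupport_div_natCast hg)) h
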